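/- In the regular representation of the group algebra ℂ[S(m)], the Jucys-Murphy element J_m = Σ_{a=1}^{m-1}(a m) acts diagonalizably with eigenvalues γ_μ(α) = C(m,2)·χ^μ((12))/d_μ − C(m-1,2)·χ^α((12))/d_α, where μ runs over irreps of S(m) and α over irreducible components of the restriction of μ to S(m-1), and the multiplicity of the eigenvalue γ_μ(α) is d_μ · d_α. -/

import Mathlib

open Matrix
open scoped Classical

noncomputable section

/-- A matrix representation is irreducible iff it has no nontrivial invariant subspace. -/
def MatIrred {G : Type*} [Group G] {ι : Type*} [Fintype ι] [DecidableEq ι]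
    (ρ : G →* Matrix ι ι ℂ) : Prop :=
  ∀ W : Submodule ℂ (ι → ℂ), (∀ g : G, ∀ v ∈ W, (ρ g).mulVec v ∈ W) → W = ⊥ ∨ W = ⊤

/-- Inequivalence of two matrix representations: every intertwiner vanishes. -/
def MatInequiv {G : Type*} [Group G] {ι κ : Type*} [Fintype ι] [DecidableEq ι]
    [Fintype κ] [DecidableEq κ]
    (ρ : G →* Matrix ι ι ℂ) (π : G →* Matrix κ κ ℂ) : Prop :=
  ∀ S : Matrix ι κ ℂ, (∀ g : G, ρ g * S = S * π g) → S = 0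

theorem MatIrred.schur {G : Type*} [Group G] {ι : Type*} [Fintype ι] [DecidableEq ι]
    {ρ : G →* Matrix ι ι ℂ} (h : MatIrred ρ) (M : Matrix ι ι ℂ)
    (hM : ∀ g, ρ g * M = M * ρ g) : ∃ c : ℂ, M = c • (1 : Matrix ι ι ℂ) := by
  rcases isEmpty_or_nonempty ι with hι | hι
  · exact ⟨0, by ext i; exact (hι.false i).elim⟩
  obtain ⟨c, hc⟩ := Module.End.exists_eigenvalue (Matrix.toLin' M)
  refine ⟨c, ?_⟩
  have hW := h (Module.End.eigenspace (Matrix.toLin' M) c) (by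
    intro g v hv
    rw [Module.End.mem_eigenspace_iff] at hv ⊢
    rw [Matrix.toLin'_apply] at hv ⊢
    rw [Matrix.mulVec_mulVec, ← hM, ← Matrix.mulVec_mulVec, hv, Matrix.mulVec_smul])
  rcases hW with hW | hW
  · exact (hc hW).elim
  · apply Matrix.toLin'.injective
    ext1 i
    ext1
    have : (Pi.single i 1 : ι → ℂ) ∈ Module.End.eigenspace (Matrix.toLin' M) c := by
      rw [hW]; trivial
    rw [Module.End.mem_eigenspace_iff] at this
    simp only [LinearMap.comp_apply, LinearMap.single_apply]
    rw [this]
    simp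

/-- scalar value through the trace -/
theorem MatIrred.schur_trace {G : Type*} [Group G] {ι : Type*} [Fintype ι] [DecidableEq ι]
    {ρ : G →* Matrix ι ι ℂ} (h : MatIrred ρ) (M : Matrix ι ι ℂ)
    (hM : ∀ g, ρ g * M = M * ρ g) :
    M = (M.trace / (Fintype.card ι : ℂ)) • (1 : Matrix ι ι ℂ) := by
  obtain ⟨c, rfl⟩ := h.schur M hM
  rcases isEmpty_or_nonempty ι with hι | hι
  · ext i; exact (hι.false i).elim
  · have : (Fintype.card ι : ℂ) ≠ 0 := by
      exact_mod_cast Fintype.card_ne_zero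
    rw [Matrix.trace_smul, Matrix.trace_one, smul_eq_mul, mul_div_assoc, div_self this, mul_one]

/-- averaged operator -/
def avgMat {G : Type*} [Group G] [Fintype G] {ι κ : Type*} [Fintype ι] [DecidableEq ι]
    [Fintype κ] [DecidableEq κ]
    (ρ : G →* Matrix ι ι ℂ) (π : G →* Matrix κ κ ℂ) (E : Matrix ι κ ℂ) : Matrix ι κ ℂ :=
  ∑ g, ρ g * E * π g⁻¹

theorem avgMat_intertwines {G : Type*} [Group G] [Fintype G] {ι κ : Type*} [Fintype ι]
    [DecidableEq ι] [Fintype κ] [DecidableEq κ]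
    (ρ : G →* Matrix ι ι ℂ) (π : G →* Matrix κ κ ℂ) (E : Matrix ι κ ℂ) (h : G) :
    ρ h * avgMat ρ π E = avgMat ρ π E * π h := by
  unfold avgMat
  rw [Matrix.mul_sum, Matrix.sum_mul, ← Equiv.sum_comp (Equiv.mulLeft h)
    (fun g => ρ g * E * π g⁻¹ * π h)]
  refine Finset.sum_congr rfl fun g _ => ?_
  simp only [Equiv.coe_mulLeft, Matrix.mul_assoc, _root_.mul_inv_rev, map_mul]
  rw [← map_mul π h⁻¹ h, inv_mul_cancel, map_one, Matrix.mul_one]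

theorem avgMat_single_apply {G : Type*} [Group G] [Fintype G] {ι κ : Type*} [Fintype ι]
    [DecidableEq ι] [Fintype κ] [DecidableEq κ]
    (ρ : G →* Matrix ι ι ℂ) (π : G →* Matrix κ κ ℂ) (k : ι) (l : κ) (i : ι) (j : κ) :
    avgMat ρ π (Matrix.single k l 1) i j = ∑ g, ρ g i k * π g⁻¹ l j := by
  unfold avgMat
  rw [Matrix.sum_apply]
  refine Finset.sum_congr rfl fun g _ => ?_
  rw [Matrix.mul_apply, Finset.sum_eq_single l]
  · simp
  · intro b _ hb
    rw [Matrix.mul_single_apply_of_ne _ _ _ _ _ hb, zero_mul]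
  · simp

theorem avgMat_self {G : Type*} [Group G] [Fintype G] {ι : Type*} [Fintype ι]
    [DecidableEq ι] {ρ : G →* Matrix ι ι ℂ} (h : MatIrred ρ) (E : Matrix ι ι ℂ) :
    avgMat ρ ρ E = ((Fintype.card G : ℂ) * E.trace / (Fintype.card ι : ℂ)) •
      (1 : Matrix ι ι ℂ) := by
  rw [h.schur_trace _ (avgMat_intertwines ρ ρ E)]
  congr 2
  unfold avgMat
  rw [Matrix.trace_sum]
  rw [Finset.sum_congr rfl (g := fun _ => E.trace)]
  · simp
  · intro g _
    rw [Matrix.trace_mul_comm, ← Matrix.mul_assoc, ← map_mul, inv_mul_cancel, map_one,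
      Matrix.one_mul]

/-- The Fourier transform -/
def fourierMap {G : Type*} [Group G] {I : Type*} {ι : I → Type*} [∀ μ, Fintype (ι μ)]
    [∀ μ, DecidableEq (ι μ)] (ψ : ∀ μ, G →* Matrix (ι μ) (ι μ) ℂ) :
    MonoidAlgebra ℂ G →ₐ[ℂ] ∀ μ, Matrix (ι μ) (ι μ) ℂ :=
  AlgHom.pi (fun μ => MonoidAlgebra.lift ℂ _ G (ψ μ))

theorem fourierMap_of {G : Type*} [Group G] {I : Type*} {ι : I → Type*} [∀ μ, Fintype (ι μ)]
    [∀ μ, DecidableEq (ι μ)] (ψ : ∀ μ, G →* Matrix (ι μ) (ι μ) ℂ) (g : G) (μ : I) :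
    fourierMap ψ (MonoidAlgebra.of ℂ G g) μ = ψ μ g := by
  simp [fourierMap]

theorem fourierMap_surjective {G : Type*} [Group G] [Fintype G] {I : Type*} [Fintype I]
    {ι : I → Type*} [∀ μ, Fintype (ι μ)]
    [∀ μ, DecidableEq (ι μ)] (ψ : ∀ μ, G →* Matrix (ι μ) (ι μ) ℂ)
    (hirr : ∀ μ, MatIrred (ψ μ)) (hineq : ∀ μ ν, μ ≠ ν → MatInequiv (ψ μ) (ψ ν)) :
    Function.Surjective (fourierMap ψ) := by
  have key : ∀ ν (j l : ι ν), Pi.single ν (Matrix.single j l (1 : ℂ)) ∈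
      LinearMap.range (fourierMap ψ).toLinearMap := by
    intro ν j l
    have hd : (Fintype.card (ι ν) : ℂ) ≠ 0 := by
      have : Nonempty (ι ν) := ⟨j⟩
      exact_mod_cast Fintype.card_ne_zero
    have hG : (Fintype.card G : ℂ) ≠ 0 := by exact_mod_cast Fintype.card_ne_zero
    refine ⟨((Fintype.card (ι ν) : ℂ) / Fintype.card G) •
      ∑ g : G, (ψ ν g⁻¹ l j) • MonoidAlgebra.of ℂ G g, ?_⟩
    rw [map_smul, map_sum]
    funext μ
    ext i k
    have h1 : (∑ g : G, (fourierMap ψ).toLinearMap ((ψ ν g⁻¹ l j) • MonoidAlgebra.of ℂ G g)) μ i k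
        = avgMat (ψ μ) (ψ ν) (Matrix.single k l 1) i j := by
      rw [avgMat_single_apply, Finset.sum_apply, Matrix.sum_apply]
      refine Finset.sum_congr rfl fun g _ => ?_
      rw [map_smul, Pi.smul_apply, Matrix.smul_apply, AlgHom.toLinearMap_apply, fourierMap_of,
        smul_eq_mul, mul_comm]
    rw [Pi.smul_apply, Matrix.smul_apply, h1]
    by_cases hμ : μ = ν
    · subst hμ
      rw [avgMat_self (hirr μ), Pi.single_eq_same]
      by_cases hkl : k = l
      · subst hkl
        by_cases hij : j = i
        · subst hij
          simp
          field_simp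
        · simp [Matrix.single, hij, Matrix.one_apply_ne (Ne.symm hij)]
      · rw [Matrix.trace_single_eq_of_ne _ _ _ hkl]
        simp [Matrix.single, Ne.symm hkl]
    · rw [hineq μ ν hμ _ (avgMat_intertwines _ _ _), Pi.single_eq_of_ne hμ]
      simp
  have : LinearMap.range (fourierMap ψ).toLinearMap = ⊤ := by
    rw [eq_top_iff]
    intro f _
    have hf : f = ∑ ν, Pi.single ν (f ν) := by
      funext μ; simp
    rw [hf]
    refine Submodule.sum_mem _ fun ν _ => ?_
    rw [Matrix.matrix_eq_sum_single (f ν)]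
    have : (Pi.single ν (∑ i, ∑ j, Matrix.single i j (f ν i j)) : ∀ μ, Matrix (ι μ) (ι μ) ℂ)
        = ∑ i, ∑ j, (f ν i j) • Pi.single ν (Matrix.single i j (1 : ℂ)) := by
      simp only [← Pi.single_smul, Matrix.smul_single, smul_eq_mul, mul_one]
      rw [← LinearMap.single_apply (R := ℂ)]
      simp only [map_sum, LinearMap.single_apply]
    rw [this]
    exact Submodule.sum_mem _ fun i _ => Submodule.sum_mem _ fun j _ =>
      Submodule.smul_mem _ _ (key ν i j)
  intro f
  have hf : f ∈ LinearMap.range (fourierMap ψ).toLinearMap := by rw [this]; trivial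
  exact hf

theorem eigen_of_basis {V K : Type*} [AddCommGroup V] [Module ℂ V] [Fintype K]
    (b : Module.Basis K ℂ V) (T : V →ₗ[ℂ] V) (Γ : K → ℂ) (hT : ∀ k, T (b k) = Γ k • b k) :
    ((⨆ c : ℂ, Module.End.eigenspace T c) = ⊤) ∧
    (∀ c : ℂ, Module.finrank ℂ (Module.End.eigenspace T c)
      = (Finset.univ.filter (fun k => Γ k = c)).card) := by
  constructor
  · rw [eq_top_iff, ← b.span_eq, Submodule.span_le]
    rintro _ ⟨k, rfl⟩
    exact Submodule.mem_iSup_of_mem (Γ k) (Module.End.mem_eigenspace_iff.2 (hT k))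
  · intro c
    have h : Module.End.eigenspace T c =
        Submodule.span ℂ (Set.range (fun k : {k // Γ k = c} => b k)) := by
      apply le_antisymm
      · intro v hv
        rw [Module.End.mem_eigenspace_iff] at hv
        have hk : ∀ k, Γ k ≠ c → b.repr v k = 0 := by
          intro k hk
          have h1 : b.repr (T v) k = Γ k * b.repr v k := by
            have h0 : T v = ∑ i, (b.repr v i * Γ i) • b i := by
              conv_lhs => rw [← b.sum_repr v]
              rw [map_sum]
              exact Finset.sum_congr rfl fun i _ => by rw [map_smul, hT, smul_smul]
            rw [h0, b.repr_sum_self, mul_comm]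
          rw [hv, map_smul, Finsupp.smul_apply, smul_eq_mul] at h1
          have h2 : (Γ k - c) * b.repr v k = 0 := by rw [sub_mul, h1, sub_self]
          exact (mul_eq_zero.1 h2).resolve_left (sub_ne_zero.2 hk)
        rw [← b.sum_repr v]
        refine Submodule.sum_mem _ fun k _ => ?_
        by_cases hc : Γ k = c
        · exact Submodule.smul_mem _ _ (Submodule.subset_span ⟨⟨k, hc⟩, rfl⟩)
        · rw [hk k hc, zero_smul]; exact Submodule.zero_mem _
      · rw [Submodule.span_le]
        rintro _ ⟨⟨k, hk⟩, rfl⟩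
        exact Module.End.mem_eigenspace_iff.2 (by rw [hT k, hk])
    rw [h]
    refine (finrank_span_eq_card (b.linearIndependent.comp _ Subtype.val_injective)).trans ?_
    rw [Fintype.card_subtype]

/-- The abstract spectral statement. -/
theorem spectrum_of_diagonal {G : Type*} [Group G] [Fintype G] {I : Type*} [Fintype I]
    {ι : I → Type*} [∀ μ, Fintype (ι μ)]
    [∀ μ, DecidableEq (ι μ)] (ψ : ∀ μ, G →* Matrix (ι μ) (ι μ) ℂ)
    (hirr : ∀ μ, MatIrred (ψ μ)) (hineq : ∀ μ ν, μ ≠ ν → MatInequiv (ψ μ) (ψ ν))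
    (hcomplete : ∑ μ : I, (Fintype.card (ι μ)) ^ 2 = Fintype.card G)
    (J : MonoidAlgebra ℂ G) (Γ : ∀ μ, ι μ → ℂ)
    (hJ : ∀ μ, fourierMap ψ J μ = Matrix.diagonal (Γ μ)) :
    ((⨆ c : ℂ, Module.End.eigenspace (LinearMap.mulLeft ℂ J) c) = ⊤) ∧
    (∀ c : ℂ, Module.finrank ℂ (Module.End.eigenspace (LinearMap.mulLeft ℂ J) c)
      = ∑ μ : I, Fintype.card (ι μ) * (Finset.univ.filter (fun i => Γ μ i = c)).card) := by
  have hs := fourierMap_surjective ψ hirr hineq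
  have hfd : FiniteDimensional ℂ (MonoidAlgebra ℂ G) :=
    Module.Finite.of_basis (MonoidAlgebra.basis G ℂ)
  have hdim : Module.finrank ℂ (MonoidAlgebra ℂ G) =
      Module.finrank ℂ (∀ μ, Matrix (ι μ) (ι μ) ℂ) := by
    rw [Module.finrank_pi_fintype, Module.finrank_eq_card_basis
      (MonoidAlgebra.basis G ℂ), ← hcomplete]
    simp [Module.finrank_matrix, sq]
  have hi : Function.Injective (fourierMap ψ).toLinearMap :=
    (LinearMap.injective_iff_surjective_of_finrank_eq_finrank hdim).2 hs
  let e : MonoidAlgebra ℂ G ≃ₗ[ℂ] ∀ μ, Matrix (ι μ) (ι μ) ℂ :=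
    LinearEquiv.ofBijective (fourierMap ψ).toLinearMap ⟨hi, hs⟩
  have he : ∀ z, e z = fourierMap ψ z := fun z => rfl
  let b := (Pi.basis (fun μ => Matrix.stdBasis ℂ (ι μ) (ι μ))).map e.symm
  have hb : ∀ k : (μ : I) × (ι μ × ι μ), LinearMap.mulLeft ℂ J (b k) = Γ k.1 k.2.1 • b k := by
    rintro ⟨μ, i, j⟩
    apply e.injective
    have hbe : e (b ⟨μ, i, j⟩) = Pi.single μ (Matrix.single i j 1) := by
      simp [b, Pi.basis_apply, Matrix.stdBasis_eq_single]
    rw [map_smul, hbe, LinearMap.mulLeft_apply, he, map_mul, ← he (b _), hbe]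
    funext ν
    rw [Pi.mul_apply, hJ]
    by_cases hν : ν = μ
    · subst hν
      simp only [Pi.single_eq_same, Pi.smul_apply]
      ext i' j'
      rw [Matrix.diagonal_mul]
      by_cases h : i = i'
      · subst h; simp
      · simp [Matrix.single, h]
    · simp [Pi.single_eq_of_ne hν]
  obtain ⟨h1, h2⟩ := eigen_of_basis b _ _ hb
  refine ⟨h1, fun c => ?_⟩
  rw [h2 c, Finset.card_filter, Fintype.sum_sigma]
  refine Finset.sum_congr rfl fun μ _ => ?_
  rw [Fintype.sum_prod_type, Finset.card_filter, Finset.mul_sum]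
  refine Finset.sum_congr rfl fun i _ => ?_
  by_cases h : Γ μ i = c <;> simp [h]

/-- moving pairs, fixing all points outside -/
theorem exists_move {α : Type*} [DecidableEq α] (p q a b : α) (hpq : p ≠ q) (hab : a ≠ b) :
    ∃ g : Equiv.Perm α, g p = a ∧ g q = b ∧
      ∀ x, x ≠ p → x ≠ q → x ≠ a → x ≠ b → g x = x := by
  refine ⟨Equiv.swap (Equiv.swap p a q) b * Equiv.swap p a, ?_, ?_, ?_⟩
  · have : a ≠ Equiv.swap p a q := by
      intro h
      apply hpq
      apply (Equiv.swap p a).injective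
      rw [Equiv.swap_apply_left]; exact h
    rw [Equiv.Perm.mul_apply, Equiv.swap_apply_left, Equiv.swap_apply_of_ne_of_ne this hab]
  · rw [Equiv.Perm.mul_apply, Equiv.swap_apply_left]
  · intro x h1 h2 h3 h4
    rw [Equiv.Perm.mul_apply, Equiv.swap_apply_of_ne_of_ne h1 h3,
      Equiv.swap_apply_of_ne_of_ne ?_ h4]
    intro h
    apply h2
    apply (Equiv.swap p a).injective
    rw [← h, Equiv.swap_apply_of_ne_of_ne h1 h3]

/-- A sum of matrices permuted by conjugation, all with the same trace, in an irrep. -/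
theorem class_sum_scalar {G : Type*} [Group G] {ι : Type*} [Fintype ι] [DecidableEq ι]
    {ρ : G →* Matrix ι ι ℂ} (h : MatIrred ρ) {K : Type*} [Fintype K] (s : K → G)
    (σ : G → Equiv.Perm K) (hσ : ∀ g k, g * s k * g⁻¹ = s (σ g k)) (t : G)
    (ht : ∀ k, ∃ g, g * t * g⁻¹ = s k) :
    ∑ k, ρ (s k) = ((Fintype.card K : ℂ) * (ρ t).trace / (Fintype.card ι : ℂ)) •
      (1 : Matrix ι ι ℂ) := by
  rw [h.schur_trace (∑ k, ρ (s k))]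
  · congr 2
    rw [Matrix.trace_sum, Finset.sum_congr rfl (g := fun _ => (ρ t).trace)]
    · simp
    · intro k _
      obtain ⟨g, hg⟩ := ht k
      rw [← hg, map_mul, map_mul, Matrix.trace_mul_comm, ← Matrix.mul_assoc, ← map_mul,
        inv_mul_cancel, map_one, Matrix.one_mul]
  · intro g
    rw [Finset.mul_sum, Finset.sum_mul, ← Equiv.sum_comp (σ g) (fun k => ρ (s k) * ρ g)]
    refine Finset.sum_congr rfl fun k _ => ?_
    rw [← hσ, ← map_mul, ← map_mul]
    congr 1
    group

theorem pair_sum_split {α M : Type*} [Fintype α] [DecidableEq α] [AddCommMonoid M] (x : α)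
    (F : α → α → M) (hF : ∀ a b, F a b = F b a) :
    ∑ p : {p : α × α // p.1 ≠ p.2}, F p.1.1 p.1.2 =
      2 • (∑ a ∈ Finset.univ.filter (fun a => a ≠ x), F a x) +
      ∑ p : {p : α × α // p.1 ≠ p.2 ∧ p.1 ≠ x ∧ p.2 ≠ x}, F p.1.1 p.1.2 := by
  have e1 : ∑ p : {p : α × α // p.1 ≠ p.2}, F p.1.1 p.1.2 =
      ∑ a, ∑ b, if a ≠ b then F a b else 0 := by
    rw [← Finset.sum_subtype (Finset.univ.filter (fun p : α × α => p.1 ≠ p.2)) (by simp)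
      (fun p : α × α => F p.1 p.2), Finset.sum_filter, Fintype.sum_prod_type]
  have e2 : ∑ p : {p : α × α // p.1 ≠ p.2 ∧ p.1 ≠ x ∧ p.2 ≠ x}, F p.1.1 p.1.2 =
      ∑ a, ∑ b, if a ≠ b ∧ a ≠ x ∧ b ≠ x then F a b else 0 := by
    rw [← Finset.sum_subtype (Finset.univ.filter
      (fun p : α × α => p.1 ≠ p.2 ∧ p.1 ≠ x ∧ p.2 ≠ x)) (by simp)
      (fun p : α × α => F p.1 p.2), Finset.sum_filter, Fintype.sum_prod_type]
  have e3 : ∑ a ∈ Finset.univ.filter (fun a => a ≠ x), F a x =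
      ∑ a, ∑ b, if b = x then (if a ≠ x then F a x else 0) else 0 := by
    rw [Finset.sum_filter]
    refine Finset.sum_congr rfl fun a _ => ?_
    rw [Finset.sum_ite_eq' Finset.univ x]
    simp
  have e4 : ∑ a ∈ Finset.univ.filter (fun a => a ≠ x), F a x =
      ∑ a, ∑ b, if a = x then (if b ≠ x then F b x else 0) else 0 := by
    rw [e3, Finset.sum_comm]
  rw [two_nsmul]
  nth_rewrite 2 [e4]
  rw [e1, e2, e3]
  simp only [← Finset.sum_add_distrib]
  refine Finset.sum_congr rfl fun a _ => Finset.sum_congr rfl fun b _ => ?_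
  by_cases ha : a = x
  · by_cases hb : b = x
    · simp [ha, hb]
    · simp [ha, hb, Ne.symm hb, hF x b]
  · by_cases hb : b = x
    · simp [ha, hb]
    · simp [ha, hb]

theorem card_pairs (m : ℕ) :
    (Fintype.card {p : Fin m × Fin m // p.1 ≠ p.2} : ℂ) = 2 * (m.choose 2 : ℂ) := by
  rw [Fintype.card_of_subtype (Finset.univ : Finset (Fin m)).offDiag (by simp),
    Finset.offDiag_card, Nat.cast_choose_two, Finset.card_univ, Fintype.card_fin,
    Nat.cast_sub (Nat.le_mul_self m)]
  push_cast
  ring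

theorem card_pairs_ne (m : ℕ) (x : Fin m) :
    (Fintype.card {p : Fin m × Fin m // p.1 ≠ p.2 ∧ p.1 ≠ x ∧ p.2 ≠ x} : ℂ)
      = 2 * ((m - 1).choose 2 : ℂ) := by
  rw [Fintype.card_of_subtype ((Finset.univ : Finset (Fin m)).erase x).offDiag
      (by intro p; simp [Finset.mem_offDiag]; tauto),
    Finset.offDiag_card, Nat.cast_choose_two, Finset.card_erase_of_mem (Finset.mem_univ x),
    Finset.card_univ, Fintype.card_fin,
    Nat.cast_sub (Nat.le_mul_self (m - 1))]
  push_cast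
  ring

theorem swap_mem_stab {m : ℕ} {x a b : Fin m} (ha : a ≠ x) (hb : b ≠ x) :
    Equiv.swap a b ∈ MulAction.stabilizer (Equiv.Perm (Fin m)) x := by
  rw [MulAction.mem_stabilizer_iff, Equiv.Perm.smul_def]
  exact Equiv.swap_apply_of_ne_of_ne ha.symm hb.symm

theorem stab_ne_iff {m : ℕ} {x : Fin m} (g : MulAction.stabilizer (Equiv.Perm (Fin m)) x)
    (a : Fin m) : (g : Equiv.Perm (Fin m)) a ≠ x ↔ a ≠ x := by
  have h : (g : Equiv.Perm (Fin m)) x = x := g.2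
  rw [not_iff_not]
  constructor
  · intro h'
    exact (g : Equiv.Perm (Fin m)).injective (h'.trans h.symm)
  · rintro rfl; exact h

theorem full_class_sum {m : ℕ} {ι : Type*} [Fintype ι] [DecidableEq ι]
    {ρ : Equiv.Perm (Fin m) →* Matrix ι ι ℂ} (h : MatIrred ρ) (a0 a1 : Fin m) (h01 : a0 ≠ a1) :
    ∑ p : {p : Fin m × Fin m // p.1 ≠ p.2}, ρ (Equiv.swap p.1.1 p.1.2) =
      (2 * (m.choose 2 : ℂ) * (ρ (Equiv.swap a0 a1)).trace / (Fintype.card ι : ℂ)) •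
        (1 : Matrix ι ι ℂ) := by
  rw [← card_pairs]
  refine class_sum_scalar h (fun p : {p : Fin m × Fin m // p.1 ≠ p.2} =>
    Equiv.swap p.1.1 p.1.2) (fun g => (Equiv.prodCongr g g).subtypeEquiv (by simp)) ?_ _ ?_
  · rintro g ⟨⟨a, b⟩, hab⟩
    exact (Equiv.swap_apply_apply g a b).symm
  · rintro ⟨⟨a, b⟩, hab⟩
    obtain ⟨g, h1, h2, -⟩ := exists_move a0 a1 a b h01 hab
    refine ⟨g, ?_⟩
    rw [← Equiv.swap_apply_apply, h1, h2]

theorem stab_class_sum {m : ℕ} {x : Fin m} {ι : Type*} [Fintype ι] [DecidableEq ι]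
    {ρ : MulAction.stabilizer (Equiv.Perm (Fin m)) x →* Matrix ι ι ℂ} (h : MatIrred ρ)
    (a0 a1 : Fin m) (h01 : a0 ≠ a1) (h0 : a0 ≠ x) (h1 : a1 ≠ x) :
    ∑ p : {p : Fin m × Fin m // p.1 ≠ p.2 ∧ p.1 ≠ x ∧ p.2 ≠ x},
        ρ ⟨Equiv.swap p.1.1 p.1.2, swap_mem_stab p.2.2.1 p.2.2.2⟩ =
      (2 * ((m - 1).choose 2 : ℂ) * (ρ ⟨Equiv.swap a0 a1, swap_mem_stab h0 h1⟩).trace /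
        (Fintype.card ι : ℂ)) • (1 : Matrix ι ι ℂ) := by
  rw [← card_pairs_ne m x]
  refine class_sum_scalar h (fun p : {p : Fin m × Fin m // p.1 ≠ p.2 ∧ p.1 ≠ x ∧ p.2 ≠ x} =>
    ⟨Equiv.swap p.1.1 p.1.2, swap_mem_stab p.2.2.1 p.2.2.2⟩)
    (fun g => (Equiv.prodCongr (g : Equiv.Perm (Fin m)) (g : Equiv.Perm (Fin m))).subtypeEquiv
      (by
        rintro ⟨a, b⟩
        have ha := stab_ne_iff g a
        have hb := stab_ne_iff g b
        have hab := (g : Equiv.Perm (Fin m)).injective.ne_iff (x := a) (y := b)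
        change (a ≠ b ∧ a ≠ x ∧ b ≠ x) ↔ ((g : Equiv.Perm (Fin m)) a ≠ (g : Equiv.Perm (Fin m)) b ∧
          (g : Equiv.Perm (Fin m)) a ≠ x ∧ (g : Equiv.Perm (Fin m)) b ≠ x)
        rw [ha, hb, hab])) ?_ _ ?_
  · rintro g ⟨⟨a, b⟩, hab⟩
    apply Subtype.ext
    exact (Equiv.swap_apply_apply (g : Equiv.Perm (Fin m)) a b).symm
  · rintro ⟨⟨a, b⟩, hab, ha, hb⟩
    obtain ⟨g, e1, e2, e3⟩ := exists_move a0 a1 a b h01 hab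
    refine ⟨⟨g, e3 x h0.symm h1.symm ha.symm hb.symm⟩, ?_⟩
    apply Subtype.ext
    change g * Equiv.swap a0 a1 * g⁻¹ = Equiv.swap a b
    rw [← Equiv.swap_apply_apply, e1, e2]

/-- in the regular representation of `ℂ[S(m)]` the Jucys–Murphy element
`J_m = Σ_a (a m)` acts diagonalizably with eigenvalues
`γ_μ(α) = C(m,2)·χ^μ((12))/d_μ − C(m-1,2)·χ^α((12))/d_α`
(over all irreps `μ` of `S(m)`, presented as PRIRs w.r.t. `S(m-1)` with multiplicity-free
restriction with blocks `α`), the eigenvalue `γ_μ(α)` occurring with multiplicity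
`d_μ·d_α`. -/
theorem jucys_murphy_regular_spectrum {m : ℕ} (hm : 3 ≤ m)
    (x a0 a1 : Fin m) (hx : (x : ℕ) = m - 1) (ha0 : (a0 : ℕ) = 0) (ha1 : (a1 : ℕ) = 1)
    (hmem : Equiv.swap a0 a1 ∈ MulAction.stabilizer (Equiv.Perm (Fin m)) x)
    -- a complete set of pairwise inequivalent irreps of S(m), in PRIR form w.r.t. the
    -- stabilizer of x
    {I : Type*} [Fintype I] (B : I → Type*)
    [∀ μ, Fintype (B μ)] [∀ μ, DecidableEq (B μ)] (dB : ∀ μ, B μ → ℕ)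
    (φ : ∀ (μ : I) (b : B μ), (MulAction.stabilizer (Equiv.Perm (Fin m)) x) →*
        Matrix (Fin (dB μ b)) (Fin (dB μ b)) ℂ)
    (ψ : ∀ μ : I, Equiv.Perm (Fin m) →*
        Matrix ((b : B μ) × Fin (dB μ b)) ((b : B μ) × Fin (dB μ b)) ℂ)
    (hψu : ∀ μ g, (ψ μ g)ᴴ * ψ μ g = 1) (hψirr : ∀ μ, MatIrred (ψ μ))
    (hblock : ∀ μ (h : MulAction.stabilizer (Equiv.Perm (Fin m)) x),
        ψ μ (h : Equiv.Perm (Fin m)) = Matrix.blockDiagonal' (fun b => φ μ b h))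
    (hφirr : ∀ μ b, MatIrred (φ μ b))
    (hmf : ∀ μ (b b' : B μ), b ≠ b' → MatInequiv (φ μ b) (φ μ b'))
    (hineq : ∀ μ ν, μ ≠ ν → MatInequiv (ψ μ) (ψ ν))
    (hcomplete : ∑ μ : I, (Fintype.card ((b : B μ) × Fin (dB μ b))) ^ 2
        = Fintype.card (Equiv.Perm (Fin m)))
    -- the Jucys-Murphy element and left multiplication by it on ℂ[S(m)]
    (J : MonoidAlgebra ℂ (Equiv.Perm (Fin m)))
    (hJ : J = ∑ a ∈ Finset.univ.filter (fun a : Fin m => a ≠ x),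
        MonoidAlgebra.of ℂ (Equiv.Perm (Fin m)) (Equiv.swap a x))
    -- the eigenvalues γ_μ(α)
    (γ : ∀ μ : I, B μ → ℂ)
    (hγ : ∀ μ b, γ μ b =
        (m.choose 2 : ℂ) * Matrix.trace (ψ μ (Equiv.swap a0 a1)) /
            (Fintype.card ((b : B μ) × Fin (dB μ b)) : ℂ) -
          ((m - 1).choose 2 : ℂ) * Matrix.trace (φ μ b ⟨Equiv.swap a0 a1, hmem⟩) /
            (dB μ b : ℂ)) :
    ((⨆ c : ℂ, Module.End.eigenspace (LinearMap.mulLeft ℂ J) c) = ⊤) ∧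
    (∀ c : ℂ, Module.finrank ℂ (Module.End.eigenspace (LinearMap.mulLeft ℂ J) c)
        = ∑ μ : I, ∑ b ∈ Finset.univ.filter (fun b : B μ => γ μ b = c),
            Fintype.card ((b : B μ) × Fin (dB μ b)) * dB μ b) := by
  have h01 : a0 ≠ a1 := by
    intro h; rw [h] at ha0; omega
  have h0 : a0 ≠ x := by
    intro h; rw [h] at ha0; omega
  have h1 : a1 ≠ x := by
    intro h; rw [h] at ha1; omega
  have hdiag : ∀ μ, fourierMap ψ J μ = Matrix.diagonal (fun i => γ μ i.1) := by
    intro μ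
    have hJμ : fourierMap ψ J μ =
        ∑ a ∈ Finset.univ.filter (fun a : Fin m => a ≠ x), ψ μ (Equiv.swap a x) := by
      rw [hJ, map_sum, Finset.sum_apply]
      exact Finset.sum_congr rfl fun a _ => fourierMap_of ψ _ μ
    have hsplit := pair_sum_split x (fun a b => ψ μ (Equiv.swap a b))
      (fun a b => by rw [Equiv.swap_comm])
    rw [full_class_sum (hψirr μ) a0 a1 h01] at hsplit
    have hQ : ∑ p : {p : Fin m × Fin m // p.1 ≠ p.2 ∧ p.1 ≠ x ∧ p.2 ≠ x},
        ψ μ (Equiv.swap p.1.1 p.1.2) = Matrix.diagonal (fun i : (b : B μ) × Fin (dB μ b) =>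
          2 * ((m - 1).choose 2 : ℂ) *
            (φ μ i.1 ⟨Equiv.swap a0 a1, hmem⟩).trace / (dB μ i.1 : ℂ)) := by
      have e1 : ∀ p : {p : Fin m × Fin m // p.1 ≠ p.2 ∧ p.1 ≠ x ∧ p.2 ≠ x},
          ψ μ (Equiv.swap p.1.1 p.1.2) = Matrix.blockDiagonal'AddMonoidHom _ _ ℂ (fun b => φ μ b
            ⟨Equiv.swap p.1.1 p.1.2, swap_mem_stab p.2.2.1 p.2.2.2⟩) :=
        fun p => hblock μ ⟨Equiv.swap p.1.1 p.1.2, swap_mem_stab p.2.2.1 p.2.2.2⟩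
      rw [Finset.sum_congr rfl fun p _ => e1 p, ← map_sum]
      refine Eq.trans ?_ (Matrix.blockDiagonal'_diagonal (fun (b : B μ) (_ : Fin (dB μ b)) =>
        2 * ((m - 1).choose 2 : ℂ) *
            (φ μ b ⟨Equiv.swap a0 a1, hmem⟩).trace / (dB μ b : ℂ)))
      change Matrix.blockDiagonal' _ = _
      congr 1
      funext b
      rw [Finset.sum_apply, stab_class_sum (hφirr μ b) a0 a1 h01 h0 h1, Fintype.card_fin,
        Matrix.smul_one_eq_diagonal]
    rw [hQ] at hsplit
    rw [hJμ]
    ext i j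
    have := congrFun (congrFun hsplit i) j
    simp only [two_nsmul, Matrix.add_apply, Matrix.smul_apply, smul_eq_mul] at this
    by_cases hij : i = j
    · subst hij
      rw [Matrix.diagonal_apply_eq] at this ⊢
      rw [Matrix.one_apply_eq] at this
      rw [hγ]
      linear_combination (-1 / 2) * this
    · rw [Matrix.diagonal_apply_ne _ hij] at this ⊢
      rw [Matrix.one_apply_ne hij] at this
      linear_combination (-1 / 2) * this
  obtain ⟨r1, r2⟩ := spectrum_of_diagonal ψ hψirr hineq hcomplete J (fun μ i => γ μ i.1) hdiag
  refine ⟨r1, fun c => ?_⟩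
  rw [r2 c]
  refine Finset.sum_congr rfl fun μ _ => ?_
  rw [← Finset.mul_sum, Finset.card_filter, Fintype.sum_sigma, Finset.sum_filter]
  congr 1
  refine Finset.sum_congr rfl fun b _ => ?_
  by_cases h : γ μ b = c <;> simp [h]
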